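/- arXiv:2506.05240 — 2 statements merged into one kernel-verified Lean document; each statement's English description precedes it below -/
import Mathlib

section
/- Let d be a positive natural number, L ≥ 0, μ a probability measure on ℝ^d, and v : ℝ^d × [0,1] → ℝ^d such that for each s ∈ [0,1] the map v_s := v(·, s) is differentiable with Fréchet derivative Dv_s, and z ↦ Dv_s(z) is L-Lipschitz with respect to the operator norm, uniformly in s. Define C(y) := −∫_{s ∈ [0,1]} ∫_{ℝ^d} tr(Dv_s((1−s)·x₀ + s·y)) dμ(x₀) ds, and assume that for each y considered the function (s, x₀) ↦ tr(Dv_s((1−s)·x₀ + s·y)) is integrable with respect to the product of Lebesgue measure on [0,1] and μ. Then for all y₁, y₂ ∈ ℝ^d, |C(y₁) − C(y₂)| ≤ (L · d / 2) · ‖y₁ − y₂‖. -/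
open MeasureTheory

theorem aux_trace_bound (d : ℕ)
    (A : EuclideanSpace ℝ (Fin d) →L[ℝ] EuclideanSpace ℝ (Fin d)) :
    |LinearMap.trace ℝ (EuclideanSpace ℝ (Fin d))
      (A : EuclideanSpace ℝ (Fin d) →ₗ[ℝ] EuclideanSpace ℝ (Fin d))| ≤ d * ‖A‖ := by
  rw [LinearMap.trace_eq_sum_inner _ (EuclideanSpace.basisFun (Fin d) ℝ)]
  refine (Finset.abs_sum_le_sum_abs _ _).trans ?_
  have h : ∀ i ∈ (Finset.univ : Finset (Fin d)),
      |inner ℝ (EuclideanSpace.basisFun (Fin d) ℝ i)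
        ((A : EuclideanSpace ℝ (Fin d) →ₗ[ℝ] EuclideanSpace ℝ (Fin d))
          (EuclideanSpace.basisFun (Fin d) ℝ i))| ≤ ‖A‖ := by
    intro i _
    refine (abs_real_inner_le_norm _ _).trans ?_
    have h1 := A.le_opNorm (EuclideanSpace.basisFun (Fin d) ℝ i)
    have h2 : ‖EuclideanSpace.basisFun (Fin d) ℝ i‖ = 1 :=
      (EuclideanSpace.basisFun (Fin d) ℝ).norm_eq_one i
    rw [h2, mul_one] at h1
    rw [h2, one_mul]
    exact h1
  refine (Finset.sum_le_sum h).trans ?_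
  simp

/-- Lipschitz continuity of the Jacobian of the velocity field implies
that the divergence term `C(y)` of the ELBO is `(L·d/2)`-Lipschitz in `y`. -/
theorem divergence_term_lipschitz (d : ℕ) (hd : 0 < d) (L : ℝ) (hL : 0 ≤ L)
    (μ : Measure (EuclideanSpace ℝ (Fin d))) [IsProbabilityMeasure μ]
    (v : EuclideanSpace ℝ (Fin d) → ℝ → EuclideanSpace ℝ (Fin d))
    (Dv : ℝ → EuclideanSpace ℝ (Fin d) →
      (EuclideanSpace ℝ (Fin d) →L[ℝ] EuclideanSpace ℝ (Fin d)))
    (hdiff : ∀ s ∈ Set.Icc (0 : ℝ) 1, ∀ z, HasFDerivAt (fun z => v z s) (Dv s z) z)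
    (hLip : ∀ s ∈ Set.Icc (0 : ℝ) 1, LipschitzWith (Real.toNNReal L) (Dv s))
    (y₁ y₂ : EuclideanSpace ℝ (Fin d))
    (hint : ∀ y ∈ ({y₁, y₂} : Set (EuclideanSpace ℝ (Fin d))),
      Integrable
        (fun p : ℝ × EuclideanSpace ℝ (Fin d) =>
          LinearMap.trace ℝ (EuclideanSpace ℝ (Fin d))
            (Dv p.1 ((1 - p.1) • p.2 + p.1 • y) :
              EuclideanSpace ℝ (Fin d) →ₗ[ℝ] EuclideanSpace ℝ (Fin d)))
        ((volume.restrict (Set.Icc (0 : ℝ) 1)).prod μ)) :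
    |(-∫ s in Set.Icc (0 : ℝ) 1, ∫ x₀,
        LinearMap.trace ℝ (EuclideanSpace ℝ (Fin d))
          (Dv s ((1 - s) • x₀ + s • y₁) :
            EuclideanSpace ℝ (Fin d) →ₗ[ℝ] EuclideanSpace ℝ (Fin d)) ∂μ) -
      (-∫ s in Set.Icc (0 : ℝ) 1, ∫ x₀,
        LinearMap.trace ℝ (EuclideanSpace ℝ (Fin d))
          (Dv s ((1 - s) • x₀ + s • y₂) :
            EuclideanSpace ℝ (Fin d) →ₗ[ℝ] EuclideanSpace ℝ (Fin d)) ∂μ)| ≤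
      L * d / 2 * ‖y₁ - y₂‖ := by
  have i1 := hint y₁ (by simp)
  have i2 := hint y₂ (by simp)
  have key : ∀ s ∈ Set.Icc (0 : ℝ) 1, ∀ x₀ : EuclideanSpace ℝ (Fin d),
      ‖LinearMap.trace ℝ (EuclideanSpace ℝ (Fin d))
          (Dv s ((1 - s) • x₀ + s • y₂) :
            EuclideanSpace ℝ (Fin d) →ₗ[ℝ] EuclideanSpace ℝ (Fin d)) -
        LinearMap.trace ℝ (EuclideanSpace ℝ (Fin d))
          (Dv s ((1 - s) • x₀ + s • y₁) :
            EuclideanSpace ℝ (Fin d) →ₗ[ℝ] EuclideanSpace ℝ (Fin d))‖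
        ≤ s * (L * d * ‖y₁ - y₂‖) := by
    intro s hs x₀
    rw [← map_sub, ← ContinuousLinearMap.toLinearMap_sub, Real.norm_eq_abs]
    refine (aux_trace_bound d _).trans ?_
    have h := (hLip s hs).dist_le_mul ((1 - s) • x₀ + s • y₂) ((1 - s) • x₀ + s • y₁)
    rw [dist_eq_norm, dist_eq_norm, add_sub_add_left_eq_sub, ← smul_sub, norm_smul,
      Real.coe_toNNReal L hL, Real.norm_of_nonneg hs.1, norm_sub_rev y₂ y₁] at h
    calc _ ≤ (d : ℝ) * (L * (s * ‖y₁ - y₂‖)) := by gcongr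
      _ = _ := by ring
  rw [neg_sub_neg, ← integral_sub i2.integral_prod_left i1.integral_prod_left,
    ← Real.norm_eq_abs]
  have hb : ∫ s in Set.Icc (0 : ℝ) 1, s * (L * d * ‖y₁ - y₂‖) = L * d / 2 * ‖y₁ - y₂‖ := by
    rw [integral_mul_const, integral_Icc_eq_integral_Ioc,
      ← intervalIntegral.integral_of_le zero_le_one, integral_id]
    ring
  rw [← hb]
  refine norm_integral_le_of_norm_le ?_ ?_
  · exact (Continuous.integrableOn_Icc (by fun_prop))
  · filter_upwards [i1.prod_right_ae, i2.prod_right_ae, ae_restrict_mem measurableSet_Icc]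
      with s h1 h2 hs
    rw [← integral_sub h2 h1]
    refine (norm_integral_le_of_norm_le_const (Filter.Eventually.of_forall (key s hs))).trans ?_
    simp
end

section
/- Let d be a positive natural number, L ≥ 0, μ a probability measure on ℝ^d, and v : ℝ^d × [0,1] → ℝ^d such that for each s ∈ [0,1] the map v_s := v(·, s) is differentiable with Fréchet derivative Dv_s, and z ↦ Dv_s(z) is L-Lipschitz with respect to the operator norm, uniformly in s. Define the alignment loss L_align(y) := ∫_{s ∈ [0,1]} ∫_{ℝ^d} ‖(y − x₀) − v((1−s)·x₀ + s·y, s)‖² dμ(x₀) ds and C(y) := −∫_{s ∈ [0,1]} ∫_{ℝ^d} tr(Dv_s((1−s)·x₀ + s·y)) dμ(x₀) ds, and assume that for y₁ and y₂ both integrands are integrable with respect to the product of Lebesgue measure on [0,1] and μ. If L_align(y₁) − L_align(y₂) > (L · d / 2) · ‖y₁ − y₂‖, then C(y₂) − L_align(y₂) > C(y₁) − L_align(y₁), i.e. the variational lower bound C(y) − L_align(y) is strictly larger at y₂ than at y₁. -/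
open MeasureTheory

theorem trace_bound_aux (d : ℕ)
    (A : EuclideanSpace ℝ (Fin d) →L[ℝ] EuclideanSpace ℝ (Fin d)) :
    LinearMap.trace ℝ (EuclideanSpace ℝ (Fin d))
      (A : EuclideanSpace ℝ (Fin d) →ₗ[ℝ] EuclideanSpace ℝ (Fin d)) ≤ d * ‖A‖ := by
  rw [LinearMap.trace_eq_sum_inner _ (EuclideanSpace.basisFun (Fin d) ℝ)]
  calc _ ≤ ∑ i : Fin d, ‖A‖ := by
        apply Finset.sum_le_sum
        intro i _
        refine (real_inner_le_norm _ _).trans ?_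
        have h := A.le_opNorm (EuclideanSpace.basisFun (Fin d) ℝ i)
        have h1 := (EuclideanSpace.basisFun (Fin d) ℝ).norm_eq_one i
        rw [h1, mul_one] at h
        rw [h1, one_mul]
        exact h
    _ = _ := by simp

/-- (Monotonic behavior of the ELBO.) If the alignment loss at `y₁`
exceeds that at `y₂` by more than `(L·d/2)·‖y₁ - y₂‖`, then the variational lower
bound `C(y) - L_align(y)` is strictly larger at `y₂` than at `y₁`. -/
theorem elbo_monotonic (d : ℕ) (hd : 0 < d) (L : ℝ) (hL : 0 ≤ L)
    (μ : Measure (EuclideanSpace ℝ (Fin d))) [IsProbabilityMeasure μ]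
    (v : EuclideanSpace ℝ (Fin d) → ℝ → EuclideanSpace ℝ (Fin d))
    (Dv : ℝ → EuclideanSpace ℝ (Fin d) →
      (EuclideanSpace ℝ (Fin d) →L[ℝ] EuclideanSpace ℝ (Fin d)))
    (hdiff : ∀ s ∈ Set.Icc (0 : ℝ) 1, ∀ z, HasFDerivAt (fun z => v z s) (Dv s z) z)
    (hLip : ∀ s ∈ Set.Icc (0 : ℝ) 1, LipschitzWith (Real.toNNReal L) (Dv s))
    (Lalign C : EuclideanSpace ℝ (Fin d) → ℝ)
    (hLalign : ∀ y, Lalign y =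
      ∫ s in Set.Icc (0 : ℝ) 1, ∫ x₀,
        ‖(y - x₀) - v ((1 - s) • x₀ + s • y) s‖ ^ 2 ∂μ)
    (hC : ∀ y, C y =
      -∫ s in Set.Icc (0 : ℝ) 1, ∫ x₀,
        LinearMap.trace ℝ (EuclideanSpace ℝ (Fin d))
          (Dv s ((1 - s) • x₀ + s • y) :
            EuclideanSpace ℝ (Fin d) →ₗ[ℝ] EuclideanSpace ℝ (Fin d)) ∂μ)
    (y₁ y₂ : EuclideanSpace ℝ (Fin d))
    (hint_align : ∀ y ∈ ({y₁, y₂} : Set (EuclideanSpace ℝ (Fin d))),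
      Integrable
        (fun p : ℝ × EuclideanSpace ℝ (Fin d) =>
          ‖(y - p.2) - v ((1 - p.1) • p.2 + p.1 • y) p.1‖ ^ 2)
        ((volume.restrict (Set.Icc (0 : ℝ) 1)).prod μ))
    (hint_trace : ∀ y ∈ ({y₁, y₂} : Set (EuclideanSpace ℝ (Fin d))),
      Integrable
        (fun p : ℝ × EuclideanSpace ℝ (Fin d) =>
          LinearMap.trace ℝ (EuclideanSpace ℝ (Fin d))
            (Dv p.1 ((1 - p.1) • p.2 + p.1 • y) :
              EuclideanSpace ℝ (Fin d) →ₗ[ℝ] EuclideanSpace ℝ (Fin d)))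
        ((volume.restrict (Set.Icc (0 : ℝ) 1)).prod μ))
    (hgap : Lalign y₁ - Lalign y₂ > L * d / 2 * ‖y₁ - y₂‖) :
    C y₂ - Lalign y₂ > C y₁ - Lalign y₁ := by
  have h1 := hint_trace y₁ (by simp)
  have h2 := hint_trace y₂ (by simp)
  have hid : Integrable (fun s : ℝ => s) (volume.restrict (Set.Icc (0 : ℝ) 1)) :=
    (continuous_id.continuousOn).integrableOn_Icc
  have hb : Integrable (fun p : ℝ × EuclideanSpace ℝ (Fin d) => (L * d * ‖y₁ - y₂‖) * p.1)
      ((volume.restrict (Set.Icc (0 : ℝ) 1)).prod μ) :=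
    (hid.comp_fst μ).const_mul _
  have hae : ∀ᵐ p ∂((volume.restrict (Set.Icc (0 : ℝ) 1)).prod μ), p.1 ∈ Set.Icc (0 : ℝ) 1 :=
    Measure.quasiMeasurePreserving_fst.ae (ae_restrict_mem measurableSet_Icc)
  have key := integral_mono_ae (h2.sub h1) hb (by
    filter_upwards [hae] with p hp
    simp only [Pi.sub_apply]
    rw [← map_sub, ← ContinuousLinearMap.toLinearMap_sub]
    refine (trace_bound_aux d _).trans ?_
    have h := (hLip p.1 hp).dist_le_mul ((1 - p.1) • p.2 + p.1 • y₂) ((1 - p.1) • p.2 + p.1 • y₁)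
    rw [dist_eq_norm, dist_eq_norm, add_sub_add_left_eq_sub, ← smul_sub, norm_smul,
      Real.coe_toNNReal L hL, Real.norm_of_nonneg hp.1, norm_sub_rev y₂ y₁] at h
    calc _ ≤ (d : ℝ) * (L * (p.1 * ‖y₁ - y₂‖)) := by gcongr
      _ = _ := by ring)
  have e : ∫ p, (L * d * ‖y₁ - y₂‖) * p.1 ∂((volume.restrict (Set.Icc (0 : ℝ) 1)).prod μ)
      = L * d / 2 * ‖y₁ - y₂‖ := by
    rw [integral_prod _ hb]
    simp only [integral_const, probReal_univ, one_smul]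
    rw [integral_const_mul, integral_Icc_eq_integral_Ioc,
      ← intervalIntegral.integral_of_le zero_le_one, integral_id]
    ring
  rw [e] at key
  simp only [Pi.sub_apply] at key
  rw [integral_sub h2 h1, integral_prod _ h1, integral_prod _ h2] at key
  have c1 := hC y₁
  have c2 := hC y₂
  linarith
end
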